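/- Let m ≥ 2 be even, and decompose the Clifford–Fourier kernel (given by its closed form) as K_−(x,y) = K_0^−(x,y) + Σ_{i<j} e_i e_j K_{ij}^−(x,y) with real scalar-valued functions K_0^−, K_{ij}^−. Then there exists a constant c > 0 such that for all x, y ∈ ℝ^m: |K_0^−(x,y)| ≤ c (1+|x|)^{(m−2)/2}(1+|y|)^{(m−2)/2} and |K_{ij}^−(x,y)| ≤ c (1+|x|)^{(m−2)/2}(1+|y|)^{(m−2)/2} for all i < j. -/

import Mathlib

open scoped BigOperators
open MeasureTheory

noncomputable section

namespace CliffordFourier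

/-- Concrete model of the complexified Clifford algebra `Cl_{0,m} ⊗ ℂ`:
an element is the family of its complex coefficients on the canonical basis
`e_S = e_{i₁} ⋯ e_{i_k}` (for `S = {i₁ < … < i_k} ⊆ {0,…,m-1}`). -/
def Cl (m : ℕ) : Type := Finset (Fin m) → ℂ

variable {m : ℕ}

instance : NormedAddCommGroup (Cl m) :=
  inferInstanceAs (NormedAddCommGroup (Finset (Fin m) → ℂ))
instance : NormedSpace ℝ (Cl m) :=
  inferInstanceAs (NormedSpace ℝ (Finset (Fin m) → ℂ))
instance : Module ℂ (Cl m) := inferInstanceAs (Module ℂ (Finset (Fin m) → ℂ))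
instance : CompleteSpace (Cl m) := inferInstanceAs (CompleteSpace (Finset (Fin m) → ℂ))

/-- The coefficient of `a` on the basis element `e_S`. -/
def coeff (a : Cl m) : Finset (Fin m) → ℂ := a

/-- Build an element of the Clifford algebra from its coefficients. -/
def ofCoeff (f : Finset (Fin m) → ℂ) : Cl m := f

/-- `1 = e_∅`. -/
instance : One (Cl m) := ⟨ofCoeff fun S => if S = (∅ : Finset (Fin m)) then 1 else 0⟩

/-- Clifford multiplication, determined by the relations `e_i e_j = - e_j e_i` (`i ≠ j`)
and `e_i² = -1`; on basis elements it is given by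
`e_T · e_U = (-1)^{#{(t,u) ∈ T×U : u < t}} · (-1)^{#(T∩U)} · e_{T Δ U}`. -/
instance : Mul (Cl m) :=
  ⟨fun a b => ofCoeff fun S => ∑ T : Finset (Fin m),
    ((-1 : ℂ) ^ ((((T ×ˢ (symmDiff T S)).filter fun p : Fin m × Fin m => p.2 < p.1).card)
        + (T ∩ (symmDiff T S)).card))
      * coeff a T * coeff b (symmDiff T S)⟩

/-- The generator `e_i`. -/
def e (m : ℕ) (i : Fin m) : Cl m := ofCoeff fun S => if S = {i} then 1 else 0

/-- The embedding of a vector `x ∈ ℝ^m` as `x = Σ_i x_i e_i` in the Clifford algebra. -/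
def vec (m : ℕ) (x : Fin m → ℝ) : Cl m := ∑ i : Fin m, (x i : ℂ) • e m i

/-- The Euclidean inner product `⟨x,y⟩ = Σ_i x_i y_i`. -/
def ip (x y : Fin m → ℝ) : ℝ := ∑ i, x i * y i

/-- The Euclidean norm `|x|`. -/
def nrm (x : Fin m → ℝ) : ℝ := Real.sqrt (ip x x)

/-- The wedge product `x∧y = Σ_{j<k} e_j e_k (x_j y_k - x_k y_j)`. -/
def wedge (m : ℕ) (x y : Fin m → ℝ) : Cl m :=
  ∑ j : Fin m, ∑ k : Fin m,
    if j < k then ((x j * y k - x k * y j : ℝ) : ℂ) • (e m j * e m k) else 0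

/-- Complex conjugation of the coefficients. -/
def cconj (a : Cl m) : Cl m := ofCoeff fun S => starRingEnd ℂ (coeff a S)

/-- The entire function `J̃_a(t) = t^{-a} J_a(t) = Σ_{j≥0} (-1)^j (t/2)^{2j} / (j! Γ(j+a+1) 2^a)`
(for `t > 0` this is literally `t^{-a} J_a(t)`). -/
def besselJt (a t : ℝ) : ℝ :=
  ∑' j : ℕ, ((-1 : ℝ)^j * (t/2) ^ (2*j)) / (j.factorial * Real.Gamma ((j : ℝ) + a + 1) * (2:ℝ)^a)

/-- `A*_{(m-2)/2}(s,t) = Σ_{ℓ=0}^{⌊m/4-3/4⌋} s^{m/2-2-2ℓ} (1/(2^ℓ ℓ!)) Γ(m/2)/Γ(m/2-2ℓ-1) J̃_{(m-2ℓ-3)/2}(t)`. -/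
def Astar (m : ℕ) (s t : ℝ) : ℝ :=
  ∑ l ∈ Finset.range ((m - 3)/4 + 1),
    s ^ (m/2 - 2 - 2*l) * (1 / ((2:ℝ)^l * (l.factorial : ℝ))) *
      (Real.Gamma ((m:ℝ)/2) / Real.Gamma ((m:ℝ)/2 - 2*l - 1)) *
        besselJt (((m:ℝ) - 2*l - 3)/2) t

/-- `B*_{(m-2)/2}(s,t) = -Σ_{ℓ=0}^{⌊m/4-1/2⌋} s^{m/2-1-2ℓ} (1/(2^ℓ ℓ!)) Γ(m/2)/Γ(m/2-2ℓ) J̃_{(m-2ℓ-3)/2}(t)`. -/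
def Bstar (m : ℕ) (s t : ℝ) : ℝ :=
  -∑ l ∈ Finset.range ((m - 2)/4 + 1),
    s ^ (m/2 - 1 - 2*l) * (1 / ((2:ℝ)^l * (l.factorial : ℝ))) *
      (Real.Gamma ((m:ℝ)/2) / Real.Gamma ((m:ℝ)/2 - 2*l)) *
        besselJt (((m:ℝ) - 2*l - 3)/2) t

/-- `C*_{(m-2)/2}(s,t) = -Σ_{ℓ=0}^{⌊m/4-1/2⌋} s^{m/2-1-2ℓ} (1/(2^ℓ ℓ!)) Γ(m/2)/Γ(m/2-2ℓ) J̃_{(m-2ℓ-1)/2}(t)`. -/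
def Cstar (m : ℕ) (s t : ℝ) : ℝ :=
  -∑ l ∈ Finset.range ((m - 2)/4 + 1),
    s ^ (m/2 - 1 - 2*l) * (1 / ((2:ℝ)^l * (l.factorial : ℝ))) *
      (Real.Gamma ((m:ℝ)/2) / Real.Gamma ((m:ℝ)/2 - 2*l)) *
        besselJt (((m:ℝ) - 2*l - 1)/2) t

/-- The closed form of the Clifford-Fourier kernel for even `m`:
for `m = 2` it is `cos(x₁y₂-x₂y₁) + e₁e₂ sin(x₁y₂-x₂y₁)`, and for even `m > 2` it is
`(-1)^{m/2} (π/2)^{1/2} (A*(s,t) + B*(s,t) + (x∧y) C*(s,t))`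
with `s = ⟨x,y⟩`, `t = √(|x|²|y|² - s²)`. -/
def Kcf (m : ℕ) (x y : Fin m → ℝ) : Cl m :=
  if 2 < m then
    ((-1:ℝ)^(m/2) * Real.sqrt (Real.pi/2)) •
      ((Astar m (ip x y) (Real.sqrt (ip x x * ip y y - ip x y^2))
          + Bstar m (ip x y) (Real.sqrt (ip x x * ip y y - ip x y^2))) • (1 : Cl m)
        + Cstar m (ip x y) (Real.sqrt (ip x x * ip y y - ip x y^2)) • wedge m x y)
  else
    (Real.cos (∑ j : Fin m, ∑ k : Fin m, if j < k then x j * y k - x k * y j else 0)) • (1 : Cl m)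
      + (Real.sin (∑ j : Fin m, ∑ k : Fin m, if j < k then x j * y k - x k * y j else 0)) •
          (∑ j : Fin m, ∑ k : Fin m, if j < k then e m j * e m k else 0)

/-! The proof rests on the energy `J̃_a(t)² + (t J̃_{a+1}(t))²`. Since `J̃_a'(t) = -t J̃_{a+1}(t)` and
`t² J̃_{a+2} = 2(a+1) J̃_{a+1} - J̃_a`, its derivative is `-2(2a+1) t J̃_{a+1}(t)²`, so for
`a ≥ -1/2` it decreases on `[0, ∞)` and both `J̃_a(t)` and `t J̃_{a+1}(t)` are bounded.
The indices in `A*` and `B*` are `a = (m-2ℓ-3)/2 ≥ -1/2` and those in `C*` are `a + 1`, while the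
coefficients of `x ∧ y` are at most `t` by Lagrange's identity. Hence all the Bessel factors are
bounded, and what remains are powers of `s = ⟨x,y⟩` of degree at most `(m-2)/2`. -/

open Asymptotics

/-- The `j`-th term of the power series defining `besselJt a t`. -/
def besselJtTerm (a : ℝ) (j : ℕ) (t : ℝ) : ℝ :=
  ((-1 : ℝ)^j * (t/2) ^ (2*j)) / (j.factorial * Real.Gamma ((j : ℝ) + a + 1) * (2:ℝ)^a)

theorem two_mul_besselJtTerm_succ (a : ℝ) (j : ℕ) (t : ℝ) :
    2 * (j + 1) * besselJtTerm a (j + 1) t = -t ^ 2 * besselJtTerm (a + 1) j t := by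
  simp only [besselJtTerm]
  rw [show ((j + 1 : ℕ) : ℝ) + a + 1 = j + (a + 1) + 1 by push_cast; ring,
    Real.rpow_add_one two_ne_zero, Nat.factorial_succ]
  push_cast
  field_simp
  ring

theorem besselJtTerm_eq_two_mul_add_one {a : ℝ} {j : ℕ} (h : (j : ℝ) + a + 1 ≠ 0) (t : ℝ) :
    besselJtTerm a j t = 2 * (j + a + 1) * besselJtTerm (a + 1) j t := by
  simp only [besselJtTerm]
  rw [show (j : ℝ) + (a + 1) + 1 = j + a + 1 + 1 by ring, Real.Gamma_add_one h,
    Real.rpow_add_one two_ne_zero]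
  field_simp

theorem hasDerivAt_besselJtTerm_succ (a : ℝ) (j : ℕ) (t : ℝ) :
    HasDerivAt (besselJtTerm a (j + 1)) (-t * besselJtTerm (a + 1) j t) t := by
  have h := (((((hasDerivAt_id t).div_const 2).pow (2 * (j + 1))).const_mul
    ((-1 : ℝ) ^ (j + 1))).div_const
      ((j + 1).factorial * Real.Gamma (((j + 1 : ℕ) : ℝ) + a + 1) * (2 : ℝ) ^ a))
  refine h.congr_deriv ?_
  simp only [besselJtTerm, id_eq]
  rw [show ((j + 1 : ℕ) : ℝ) + a + 1 = j + (a + 1) + 1 by push_cast; ring,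
    Real.rpow_add_one two_ne_zero, Nat.factorial_succ, show 2 * (j + 1) - 1 = 2 * j + 1 by omega]
  push_cast
  field_simp
  ring

theorem Gamma_mul_pow_le_Gamma_add {b : ℝ} (hb : 0 < b) (j : ℕ) :
    Real.Gamma b * b ^ j ≤ Real.Gamma (j + b) := by
  induction j with
  | zero => simp
  | succ j ih =>
    have hjb : 0 < (j : ℝ) + b := by positivity
    calc Real.Gamma b * b ^ (j + 1) = b * (Real.Gamma b * b ^ j) := by ring
      _ ≤ (j + b) * Real.Gamma (j + b) := by
        gcongr
        exact le_add_of_nonneg_left j.cast_nonneg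
      _ = Real.Gamma ((j + 1 : ℕ) + b) := by
        rw [← Real.Gamma_add_one hjb.ne']; push_cast; ring_nf

theorem abs_besselJtTerm (a : ℝ) (j : ℕ) (t : ℝ) :
    |besselJtTerm a j t| =
      (|t| / 2) ^ (2 * j) / |j.factorial * Real.Gamma (j + a + 1) * (2 : ℝ) ^ a| := by
  rw [besselJtTerm, abs_div, abs_mul, abs_pow, abs_neg, abs_one, one_pow, one_mul, abs_pow, abs_div,
    abs_two]

theorem abs_besselJtTerm_le {a : ℝ} (ha : -1 < a) (j : ℕ) (t : ℝ) :
    |besselJtTerm a j t| ≤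
      1 / (Real.Gamma (a + 1) * 2 ^ a) * ((t ^ 2 / (4 * (a + 1))) ^ j / j.factorial) := by
  have ha' : 0 < a + 1 := by linarith
  have hΓ : 0 < Real.Gamma (a + 1) := Real.Gamma_pos_of_pos ha'
  have hle : Real.Gamma (a + 1) * (a + 1) ^ j ≤ Real.Gamma (j + a + 1) := by
    simpa only [add_assoc] using Gamma_mul_pow_le_Gamma_add ha' j
  have hΓj : 0 < Real.Gamma (j + a + 1) := (mul_pos hΓ (pow_pos ha' j)).trans_le hle
  calc |besselJtTerm a j t|
      = (t ^ 2 / 4) ^ j / (j.factorial * Real.Gamma (j + a + 1) * 2 ^ a) := by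
        have hden : 0 < j.factorial * Real.Gamma (j + a + 1) * (2 : ℝ) ^ a := by positivity
        rw [abs_besselJtTerm, abs_of_pos hden, pow_mul, div_pow, sq_abs]
        norm_num
    _ ≤ (t ^ 2 / 4) ^ j / (j.factorial * (Real.Gamma (a + 1) * (a + 1) ^ j) * 2 ^ a) := by
        gcongr
    _ = 1 / (Real.Gamma (a + 1) * 2 ^ a) * ((t ^ 2 / (4 * (a + 1))) ^ j / j.factorial) := by
        rw [← div_div (t ^ 2), div_pow (t ^ 2 / 4)]
        field_simp

theorem abs_besselJtTerm_le_of_abs_le (a : ℝ) (j : ℕ) {t r : ℝ} (h : |t| ≤ |r|) :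
    |besselJtTerm a j t| ≤ |besselJtTerm a j r| := by
  rw [abs_besselJtTerm, abs_besselJtTerm]
  gcongr

theorem summable_besselJtTerm {a : ℝ} (ha : -1 < a) (t : ℝ) :
    Summable fun j => besselJtTerm a j t :=
  .of_norm_bounded ((Real.summable_pow_div_factorial _).mul_left _)
    fun j => abs_besselJtTerm_le ha j t

theorem hasSum_besselJtTerm {a : ℝ} (ha : -1 < a) (t : ℝ) :
    HasSum (fun j => besselJtTerm a j t) (besselJt a t) :=
  (summable_besselJtTerm ha t).hasSum

theorem besselJt_abs (a t : ℝ) : besselJt a |t| = besselJt a t := by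
  simp only [besselJt, pow_mul, div_pow, sq_abs]

theorem hasDerivAt_besselJt {a : ℝ} (ha : -1 < a) (t : ℝ) :
    HasDerivAt (besselJt a) (-t * besselJt (a + 1) t) t := by
  set r : ℝ := |t| + 1
  have hr : |r| = r := abs_of_pos (by positivity)
  have mem_ball {y : ℝ} : y ∈ Metric.ball 0 r ↔ |y| < r := by
    rw [mem_ball_zero_iff, Real.norm_eq_abs]
  have ht : t ∈ Metric.ball 0 r := mem_ball.2 (lt_add_one _)
  have bound (j : ℕ) (y : ℝ) (hy : y ∈ Metric.ball 0 r) :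
      ‖-y * besselJtTerm (a + 1) j y‖ ≤ r * |besselJtTerm (a + 1) j r| := by
    rw [mem_ball] at hy
    rw [norm_mul, norm_neg, Real.norm_eq_abs, Real.norm_eq_abs]
    exact mul_le_mul hy.le (abs_besselJtTerm_le_of_abs_le _ _ (hr.symm ▸ hy.le))
      (abs_nonneg _) (by positivity)
  have tail := hasDerivAt_tsum_of_isPreconnected
    ((summable_besselJtTerm (by linarith) r).abs.mul_left r) Metric.isOpen_ball
    (convex_ball 0 r).isPreconnected (fun j y _ => hasDerivAt_besselJtTerm_succ a j y) bound ht
    ((summable_nat_add_iff 1).2 (summable_besselJtTerm ha t)) ht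
  rw [tsum_mul_left] at tail
  refine (tail.const_add (besselJtTerm a 0 0)).congr_of_eventuallyEq (.of_forall fun y => ?_)
  rw [show besselJtTerm a 0 0 = besselJtTerm a 0 y by simp [besselJtTerm]]
  exact (summable_besselJtTerm ha y).tsum_eq_zero_add

theorem sq_mul_besselJt_add_two {a : ℝ} (ha : -1 < a) (t : ℝ) :
    t ^ 2 * besselJt (a + 2) t = 2 * (a + 1) * besselJt (a + 1) t - besselJt a t := by
  have hsum := ((hasSum_besselJtTerm (a := a + 1) (by linarith) t).mul_left (2 * (a + 1))).sub
    (hasSum_besselJtTerm ha t)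
  have term_eq (j : ℕ) : 2 * (a + 1) * besselJtTerm (a + 1) j t - besselJtTerm a j t =
      -(2 * j * besselJtTerm (a + 1) j t) := by
    have hj : (j : ℝ) + a + 1 ≠ 0 := by linarith [(j.cast_nonneg : (0 : ℝ) ≤ j)]
    rw [besselJtTerm_eq_two_mul_add_one hj]
    ring
  simp only [term_eq] at hsum
  have hshift := (hasSum_nat_add_iff' 1).2 hsum
  simp only [Nat.cast_add, Nat.cast_one, two_mul_besselJtTerm_succ, neg_mul, neg_neg,
    Finset.sum_range_one, Nat.cast_zero, mul_zero, zero_mul, neg_zero, sub_zero,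
    show a + 1 + 1 = a + 2 by ring] at hshift
  exact ((hasSum_besselJtTerm (by linarith) t).mul_left (t ^ 2)).unique hshift

/-- The energy `J̃_a(t)² + J̃_a'(t)²` of the solution `J̃_a` of Bessel's equation
`u'' + ((2a+1)/t) u' + u = 0`, written with `J̃_a'(t) = -t J̃_{a+1}(t)`. -/
def besselEnergy (a t : ℝ) : ℝ := besselJt a t ^ 2 + (besselJt (a + 1) t * t) ^ 2

theorem hasDerivAt_besselEnergy {a : ℝ} (ha : -1 < a) (t : ℝ) :
    HasDerivAt (besselEnergy a) (-(2 * (2 * a + 1) * t * besselJt (a + 1) t ^ 2)) t := by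
  have hJ := hasDerivAt_besselJt ha t
  have hJ' := (hasDerivAt_besselJt (a := a + 1) (by linarith) t).mul (hasDerivAt_id t)
  refine ((hJ.pow 2).add (hJ'.pow 2)).congr_deriv ?_
  have hrec := sq_mul_besselJt_add_two ha t
  rw [show a + 1 + 1 = a + 2 by ring]
  simp only [id_eq, Pi.mul_apply, Nat.cast_ofNat]
  linear_combination (-2 * t * besselJt (a + 1) t) * hrec

theorem antitoneOn_besselEnergy {a : ℝ} (ha : -(1 / 2) ≤ a) :
    AntitoneOn (besselEnergy a) (Set.Ici 0) := by
  have hderiv (t : ℝ) := hasDerivAt_besselEnergy (a := a) (by linarith) t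
  refine antitoneOn_of_deriv_nonpos (convex_Ici 0)
    (fun t _ => (hderiv t).continuousAt.continuousWithinAt)
    (fun t _ => (hderiv t).differentiableAt.differentiableWithinAt) fun t ht => ?_
  have ht0 : 0 ≤ t := interior_subset ht
  have ha' : 0 ≤ 2 * a + 1 := by linarith
  rw [(hderiv t).deriv, neg_nonpos]
  positivity

theorem besselEnergy_le {a : ℝ} (ha : -(1 / 2) ≤ a) (t : ℝ) :
    besselEnergy a t ≤ besselJt a 0 ^ 2 := by
  have heven : besselEnergy a |t| = besselEnergy a t := by
    simp only [besselEnergy, besselJt_abs, mul_pow, sq_abs]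
  have h0 : besselEnergy a 0 = besselJt a 0 ^ 2 := by simp [besselEnergy]
  rw [← heven, ← h0]
  exact antitoneOn_besselEnergy ha Set.self_mem_Ici (abs_nonneg t) (abs_nonneg t)

theorem abs_besselJt_le {a : ℝ} (ha : -(1 / 2) ≤ a) (t : ℝ) :
    |besselJt a t| ≤ |besselJt a 0| :=
  sq_le_sq.1 <| (le_add_of_nonneg_right (sq_nonneg _)).trans (besselEnergy_le ha t)

theorem abs_besselJt_add_one_mul_le {a : ℝ} (ha : -(1 / 2) ≤ a) (t : ℝ) :
    |besselJt (a + 1) t * t| ≤ |besselJt a 0| :=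
  sq_le_sq.1 <| (le_add_of_nonneg_left (sq_nonneg _)).trans (besselEnergy_le ha t)

theorem isBigO_besselJt {a : ℝ} (ha : -(1 / 2) ≤ a) : besselJt a =O[⊤] (1 : ℝ → ℝ) :=
  isBigO_of_le' _ (c := |besselJt a 0|) fun t => by simpa using abs_besselJt_le ha t

theorem isBigO_besselJt_add_one_mul {a : ℝ} (ha : -(1 / 2) ≤ a) :
    (fun t => besselJt (a + 1) t * t) =O[⊤] (1 : ℝ → ℝ) :=
  isBigO_of_le' _ (c := |besselJt a 0|) fun t => by simpa using abs_besselJt_add_one_mul_le ha t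

theorem isBigO_pow_mul_of_bounded {k n : ℕ} (hk : k ≤ n) {f : ℝ → ℝ}
    (hf : f =O[⊤] (1 : ℝ → ℝ)) :
    (fun p : ℝ × ℝ => p.1 ^ k * f p.2) =O[⊤] fun p => (1 + |p.1|) ^ n := by
  have hpow : (fun p : ℝ × ℝ => p.1 ^ k) =O[⊤] fun p => (1 + |p.1|) ^ n := by
    refine isBigO_of_le _ fun p => ?_
    rw [norm_pow, norm_pow, Real.norm_of_nonneg (by positivity : 0 ≤ 1 + |p.1|), Real.norm_eq_abs]
    calc |p.1| ^ k ≤ (1 + |p.1|) ^ k := by gcongr; linarith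
      _ ≤ (1 + |p.1|) ^ n := by gcongr; linarith [abs_nonneg p.1]
  have hf' : (fun p : ℝ × ℝ => f p.2) =O[⊤] fun _ => (1 : ℝ) := hf.comp_tendsto Filter.tendsto_top
  simpa only [mul_one] using hpow.mul hf'

theorem neg_half_le_besselIndex {l : ℕ} (h : 2 * l + 2 ≤ m) :
    -(1 / 2) ≤ ((m : ℝ) - 2 * l - 3) / 2 := by
  have : (2 * l + 2 : ℝ) ≤ m := mod_cast h
  linarith

theorem isBigO_Astar (hm : 2 ≤ m) :
    (fun p : ℝ × ℝ => Astar m p.1 p.2) =O[⊤] fun p => (1 + |p.1|) ^ ((m - 2) / 2) := by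
  simp only [Astar, mul_assoc]
  refine IsBigO.fun_sum fun l hl => ?_
  rw [Finset.mem_range] at hl
  have hbessel := isBigO_besselJt (neg_half_le_besselIndex (m := m) (l := l) (by omega))
  exact isBigO_pow_mul_of_bounded (by omega) ((hbessel.const_mul_left _).const_mul_left _)

theorem isBigO_Bstar (hm : 2 ≤ m) :
    (fun p : ℝ × ℝ => Bstar m p.1 p.2) =O[⊤] fun p => (1 + |p.1|) ^ ((m - 2) / 2) := by
  simp only [Bstar, mul_assoc]
  refine (IsBigO.fun_sum fun l hl => ?_).neg_left
  rw [Finset.mem_range] at hl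
  have hbessel := isBigO_besselJt (neg_half_le_besselIndex (m := m) (l := l) (by omega))
  exact isBigO_pow_mul_of_bounded (by omega) ((hbessel.const_mul_left _).const_mul_left _)

theorem isBigO_Cstar_mul (hm : 2 ≤ m) :
    (fun p : ℝ × ℝ => Cstar m p.1 p.2 * p.2) =O[⊤] fun p => (1 + |p.1|) ^ ((m - 2) / 2) := by
  simp only [Cstar, neg_mul, Finset.sum_mul, mul_assoc]
  refine (IsBigO.fun_sum fun l hl => ?_).neg_left
  rw [Finset.mem_range] at hl
  have hbessel := isBigO_besselJt_add_one_mul (neg_half_le_besselIndex (m := m) (l := l) (by omega))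
  rw [show ((m : ℝ) - 2 * l - 3) / 2 + 1 = (m - 2 * l - 1) / 2 by ring] at hbessel
  exact isBigO_pow_mul_of_bounded (by omega) ((hbessel.const_mul_left _).const_mul_left _)

theorem ip_self_nonneg (x : Fin m → ℝ) : 0 ≤ ip x x :=
  Finset.sum_nonneg fun i _ => mul_self_nonneg (x i)

theorem abs_ip_le (x y : Fin m → ℝ) : |ip x y| ≤ nrm x * nrm y := by
  rw [nrm, nrm, ← Real.sqrt_mul (ip_self_nonneg x)]
  refine Real.abs_le_sqrt ?_
  simpa only [ip, sq] using Finset.sum_mul_sq_le_sq_mul_sq Finset.univ x y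

theorem one_add_abs_ip_le (x y : Fin m → ℝ) : 1 + |ip x y| ≤ (1 + nrm x) * (1 + nrm y) := by
  have hx : 0 ≤ nrm x := Real.sqrt_nonneg _
  have hy : 0 ≤ nrm y := Real.sqrt_nonneg _
  linarith [abs_ip_le x y]

/-- The area `|x ∧ y|` of the parallelogram spanned by `x` and `y`, which is the variable `t` of
the closed form of the kernel. -/
def area (x y : Fin m → ℝ) : ℝ := Real.sqrt (ip x x * ip y y - ip x y ^ 2)

theorem sum_sum_sq_minor (x y : Fin m → ℝ) :
    ∑ j, ∑ k, (x j * y k - x k * y j) ^ 2 = 2 * (ip x x * ip y y - ip x y ^ 2) := by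
  have expand (j k : Fin m) : (x j * y k - x k * y j) ^ 2 =
      (x j * x j) * (y k * y k) + (y j * y j) * (x k * x k) - 2 * ((x j * y j) * (x k * y k)) := by
    ring
  simp only [expand, Finset.sum_sub_distrib, Finset.sum_add_distrib, ← Finset.mul_sum,
    ← Finset.sum_mul, ip]
  ring

theorem abs_minor_le_area (x y : Fin m → ℝ) (j k : Fin m) :
    |x j * y k - x k * y j| ≤ area x y := by
  rcases eq_or_ne j k with rfl | hjk
  · simp [area]
  have htwo : (x j * y k - x k * y j) ^ 2 + (x k * y j - x j * y k) ^ 2 ≤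
      ∑ p : Fin m × Fin m, (x p.1 * y p.2 - x p.2 * y p.1) ^ 2 :=
    Finset.add_le_sum (f := fun p : Fin m × Fin m => (x p.1 * y p.2 - x p.2 * y p.1) ^ 2)
      (fun _ _ => sq_nonneg _) (Finset.mem_univ (j, k)) (Finset.mem_univ (k, j)) (by simp [hjk])
  rw [Fintype.sum_prod_type, sum_sum_sq_minor] at htwo
  exact Real.abs_le_sqrt (by linarith)

theorem ofReal_smul (r : ℝ) (a : Cl m) : (r : ℂ) • a = r • a :=
  funext fun S => (Complex.real_smul (x := r) (z := coeff a S)).symm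

theorem norm_coeff_le (a : Cl m) (S : Finset (Fin m)) : ‖coeff a S‖ ≤ ‖a‖ :=
  norm_le_pi_norm (ι := Finset (Fin m)) (G := fun _ => ℂ) a S

theorem isBigO_smul_const {α : Type*} (f : α → ℝ) (a : Cl m) : (fun p => f p • a) =O[⊤] f :=
  isBigO_of_le' _ fun p => by rw [norm_smul, mul_comm]

theorem isBigO_wedge :
    (fun p : (Fin m → ℝ) × (Fin m → ℝ) => wedge m p.1 p.2) =O[⊤] fun p => area p.1 p.2 := by
  refine IsBigO.fun_sum fun j _ => IsBigO.fun_sum fun k _ => ?_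
  split_ifs
  · simp only [ofReal_smul]
    exact (isBigO_smul_const _ _).trans (.of_norm_le fun p => abs_minor_le_area p.1 p.2 j k)
  · exact isBigO_zero _ _

theorem isBigO_Kcf_two :
    (fun p : (Fin 2 → ℝ) × (Fin 2 → ℝ) => Kcf 2 p.1 p.2) =O[⊤] fun _ => (1 : ℝ) := by
  simp only [Kcf, lt_irrefl, if_false]
  refine .add ((isBigO_smul_const _ _).trans ?_) ((isBigO_smul_const _ _).trans ?_)
  · exact .of_norm_le fun p => Real.abs_cos_le_one _
  · exact .of_norm_le fun p => Real.abs_sin_le_one _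

theorem isBigO_Kcf_of_two_lt (hm : 2 < m) :
    (fun p : (Fin m → ℝ) × (Fin m → ℝ) => Kcf m p.1 p.2) =O[⊤]
      fun p => (1 + |ip p.1 p.2|) ^ ((m - 2) / 2) := by
  let st (p : (Fin m → ℝ) × (Fin m → ℝ)) : ℝ × ℝ := (ip p.1 p.2, area p.1 p.2)
  have hst : Filter.Tendsto st ⊤ ⊤ := Filter.tendsto_top
  have hscalar := (isBigO_smul_const _ (1 : Cl m)).trans
    (((isBigO_Astar hm.le).add (isBigO_Bstar hm.le)).comp_tendsto hst)
  have hbivector := ((isBigO_refl (fun p => Cstar m (st p).1 (st p).2) ⊤).smul isBigO_wedge).trans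
    ((isBigO_Cstar_mul hm.le).comp_tendsto hst)
  simp only [Kcf, if_pos hm]
  exact (hscalar.add hbivector).const_smul_left
    ((-1 : ℝ) ^ (m / 2) * Real.sqrt (Real.pi / 2))

theorem isBigO_Kcf (hm : 2 ≤ m) :
    (fun p : (Fin m → ℝ) × (Fin m → ℝ) => Kcf m p.1 p.2) =O[⊤]
      fun p => (1 + |ip p.1 p.2|) ^ ((m - 2) / 2) := by
  rcases hm.eq_or_lt with rfl | hm
  · simpa using isBigO_Kcf_two
  · exact isBigO_Kcf_of_two_lt hm

theorem kernel_bound_general (m : ℕ) (hm : 2 ≤ m) :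
    ∃ c : ℝ, 0 < c ∧ ∀ (x y : Fin m → ℝ) (S : Finset (Fin m)),
      ‖coeff (Kcf m x y) S‖
        ≤ c * (1 + nrm x) ^ ((m - 2)/2) * (1 + nrm y) ^ ((m - 2)/2) := by
  obtain ⟨c, hc, hK⟩ := (isBigO_Kcf hm).exists_pos
  refine ⟨c, hc, fun x y S => ?_⟩
  calc ‖coeff (Kcf m x y) S‖ ≤ ‖Kcf m x y‖ := norm_coeff_le _ _
    _ ≤ c * ‖(1 + |ip x y|) ^ ((m - 2) / 2)‖ := isBigOWith_top.1 hK (x, y)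
    _ = c * (1 + |ip x y|) ^ ((m - 2) / 2) := by rw [Real.norm_of_nonneg (by positivity)]
    _ ≤ c * ((1 + nrm x) * (1 + nrm y)) ^ ((m - 2) / 2) := by
      gcongr
      exact one_add_abs_ip_le x y
    _ = c * (1 + nrm x) ^ ((m - 2)/2) * (1 + nrm y) ^ ((m - 2)/2) := by rw [mul_pow, mul_assoc]

/-- Decomposing the closed-form Clifford-Fourier kernel for even `m` as
`K_-(x,y) = K_0^-(x,y) + Σ_{i<j} e_i e_j K_{ij}^-(x,y)`, the scalar components satisfy
`|K_0^-(x,y)| ≤ c (1+|x|)^{(m-2)/2} (1+|y|)^{(m-2)/2}` and likewise for `K_{ij}^-`. -/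
theorem kernel_bound (m : ℕ) (hme : Even m) (hm : 2 ≤ m) :
    ∃ c : ℝ, 0 < c ∧ ∀ x y : Fin m → ℝ,
      ‖coeff (Kcf m x y) (∅ : Finset (Fin m))‖
          ≤ c * (1 + nrm x) ^ ((m - 2)/2) * (1 + nrm y) ^ ((m - 2)/2) ∧
      ∀ i j : Fin m, i < j →
        ‖coeff (Kcf m x y) {i, j}‖
          ≤ c * (1 + nrm x) ^ ((m - 2)/2) * (1 + nrm y) ^ ((m - 2)/2) := by
  obtain ⟨c, hc, h⟩ := kernel_bound_general m hm
  exact ⟨c, hc, fun x y => ⟨h x y ∅, fun i j _ => h x y {i, j}⟩⟩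

end CliffordFourier
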